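/- Let k and m be positive integers and let a_1 < ⋯ < a_k be an increasing sequence of positive integers. Then there exists N_0 (depending only on m and on the sequence a) such that for every prime power q, every integer N ≥ N_0, and every g ∈ GL_N(F_q) with supp(g) = m, the number c of g-stable a-flags in F_q^N satisfies | c · q^{a_k · m} / F_a(N) − 1 | < q^{−N/2}. -/

import Mathlib

/-!
The support condition gives an eigenvalue `μ` with eigenspace of dimension `N - m > N / 2`. Its
Frobenius conjugate has an eigenspace of the same dimension, so `μ` is fixed by Frobenius and lies
in `F` (`exists_eigenvalue_of_matSupport`). Thus `g = c + h` with `c ∈ F` and `rank h = m`, and a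
subspace is `g`-stable if and only if it is `h`-stable.

Flags are counted through adapted bases: linearly independent tuples of length `b = a k` whose first
`a i` vectors span the `i`-th member of the flag. Each flag has the same number `P` of these
(`card_adapted_tuples`), and `F_a(N) * P` is the number `T = ∏_{j < b} (q ^ N - q ^ j)` of all
linearly independent `b`-tuples (`flagFormula_mul`). So the ratio of the number of stable flags to
`F_a(N)` is `S / T`, where `S` counts adapted bases of stable flags.

The tuples contained in `ker h` all contribute to `S`; there are `∏_{j < b} (q ^ (N - m) - q ^ j)`
of them, which is `q ^ (-b * m) * T` up to a relative error of order `q ^ (-N)`. Any other tuple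
counted by `S` spans an `h`-stable space not killed by `h`, so some nontrivial combination of it lies
in `range h` (`stable_tuples_sandwich`). There are at most `q ^ (b + b * N + m - N)` such tuples
(`card_relation_mul_le`), again a relative error of order `q ^ (-N)` for fixed `a` and `m`. The
explicit estimate is `ratio_estimate`.
-/


/-- The support of a matrix `x` over a field `F`: the cardinality of the index set minus
the maximal dimension of an eigenspace of `x` over an algebraic closure of `F`. -/
noncomputable def matSupport {ι F : Type*} [Fintype ι] [Field F] (x : Matrix ι ι F) : ℕ :=
  Fintype.card ι -
    ⨆ μ : AlgebraicClosure F,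
      Module.finrank (AlgebraicClosure F)
        ↥(Module.End.eigenspace ((x.map (algebraMap F (AlgebraicClosure F))).mulVecLin) μ)

/-- The number `F_a(N)` of `a`-flags in `F_q^N` (given by its product formula), as a real
number; here `a 0 = 0` and the convention `a_{k+1} = N` is used. -/
noncomputable def flagFormula (q k N : ℕ) (a : ℕ → ℕ) : ℝ :=
  (∏ j ∈ Finset.range N, ((q : ℝ) ^ (j + 1) - 1)) /
    ∏ i ∈ Finset.range (k + 1),
      ∏ j ∈ Finset.range ((if i + 1 ≤ k then a (i + 1) else N) - a i),
        ((q : ℝ) ^ (j + 1) - 1)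

/-- The number of `g`-stable `a`-flags in `F^N`. -/
noncomputable def stableFlagCount (k N : ℕ) (a : ℕ → ℕ) {F : Type} [Field F]
    (g : (Matrix (Fin N) (Fin N) F)ˣ) : ℕ :=
  Nat.card {V : Fin k → Submodule F (Fin N → F) //
    StrictMono V ∧ (∀ i : Fin k, Module.finrank F ↥(V i) = a (i.1 + 1)) ∧
      ∀ i : Fin k, (V i).map ((g : Matrix (Fin N) (Fin N) F)).mulVecLin = V i}

/-! ### Extension of scalars and the dominant eigenvalue -/

/-- A maximal linearly independent family of columns stays one after extending scalars. -/
lemma rank_map_algebraMap {n K L : Type*} [Fintype n] [Field K] [Field L] [Algebra K L]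
    (A : Matrix n n K) : (A.map (algebraMap K L)).rank = A.rank := by
  obtain ⟨κ, s, hs, hspan, hli⟩ := exists_linearIndependent' K A.col
  have : Fintype κ := Fintype.ofInjective s hs
  have hli' : LinearIndependent L ((A.map (algebraMap K L)).col ∘ s) :=
    linearIndependent_algebraMap_comp_iff.2 hli
  have hspan' : Submodule.span L (Set.range ((A.map (algebraMap K L)).col ∘ s)) =
      Submodule.span L (Set.range (A.map (algebraMap K L)).col) := by
    apply le_antisymm
    · exact Submodule.span_mono (Set.range_comp_subset_range _ _)
    · rw [Submodule.span_le]
      rintro _ ⟨j, rfl⟩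
      have hj : A.col j ∈ Submodule.span K (Set.range (A.col ∘ s)) :=
        hspan ▸ Submodule.subset_span ⟨j, rfl⟩
      obtain ⟨c, hc⟩ := (Submodule.mem_span_range_iff_exists_fun K).1 hj
      refine (Submodule.mem_span_range_iff_exists_fun L).2 ⟨fun i => algebraMap K L (c i), ?_⟩
      ext x
      have := congrArg (algebraMap K L) (congrFun hc x)
      simpa [Finset.sum_apply, Algebra.smul_def] using this
  rw [Matrix.rank_eq_finrank_span_cols, Matrix.rank_eq_finrank_span_cols, ← hspan, ← hspan',
    finrank_span_eq_card hli, finrank_span_eq_card hli']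

lemma finrank_eigenspace_add_rank {n K : Type*} [Fintype n] [DecidableEq n] [Field K]
    (A : Matrix n n K) (c : K) :
    Module.finrank K ↥(Module.End.eigenspace A.mulVecLin c)
      + (A - Matrix.scalar n c).rank = Fintype.card n := by
  have h : A.mulVecLin - c • (1 : Module.End K (n → K))
      = (A - Matrix.scalar n c).mulVecLin := by
    ext x i
    simp [Pi.single_apply]
  rw [Module.End.eigenspace_def, h, Matrix.rank, add_comm,
    LinearMap.finrank_range_add_finrank_ker, Module.finrank_fintype_fun_eq_card]

lemma mem_range_algebraMap_of_pow_card {F K : Type*} [Field F] [Fintype F] [Field K] [Algebra F K]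
    (x : K) (hx : x ^ Fintype.card F = x) : ∃ c : F, algebraMap F K c = x := by
  classical
  have h0 : (Polynomial.X ^ Fintype.card F - Polynomial.X : Polynomial K) ≠ 0 :=
    FiniteField.X_pow_card_sub_X_ne_zero K Fintype.one_lt_card
  have hsub : Finset.univ.image (algebraMap F K) ⊆
      (Polynomial.X ^ Fintype.card F - Polynomial.X : Polynomial K).roots.toFinset := by
    intro y hy
    obtain ⟨c, -, rfl⟩ := Finset.mem_image.1 hy
    rw [Multiset.mem_toFinset, Polynomial.mem_roots h0]
    simp [← map_pow, FiniteField.pow_card]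
  have heq := Finset.eq_of_subset_of_card_le hsub (by
    rw [Finset.card_image_of_injective _ (algebraMap F K).injective, Finset.card_univ]
    refine (Multiset.toFinset_card_le _).trans ((Polynomial.card_roots' _).trans ?_)
    rw [FiniteField.X_pow_card_sub_X_natDegree_eq K Fintype.one_lt_card])
  have hx' : x ∈ Finset.univ.image (algebraMap F K) := by
    rw [heq, Multiset.mem_toFinset, Polynomial.mem_roots h0]
    simp [hx]
  obtain ⟨c, -, hc⟩ := Finset.mem_image.1 hx'
  exact ⟨c, hc⟩

/-- An eigenvalue `μ` whose eigenspace has dimension more than `N / 2` is fixed by Frobenius, because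
`μ` and its conjugate cannot both have such an eigenspace; hence it lies in the base field. -/
lemma exists_eigenvalue_of_matSupport {F : Type*} [Field F] [Fintype F] {N m : ℕ} (hm : 0 < m)
    (hN : 2 * m < N) (A : Matrix (Fin N) (Fin N) F) (hA : matSupport A = m) :
    ∃ c : F, (A - Matrix.scalar (Fin N) c).rank = m := by
  set K := AlgebraicClosure F
  set B := A.map (algebraMap F K) with hB
  have hle : ∀ μ : K, Module.finrank K ↥(Module.End.eigenspace B.mulVecLin μ) ≤ N := fun μ => by
    simpa using Submodule.finrank_le (Module.End.eigenspace B.mulVecLin μ)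
  obtain ⟨μ, hμ⟩ : ∃ μ : K, Module.finrank K ↥(Module.End.eigenspace B.mulVecLin μ)
      = ⨆ μ : K, Module.finrank K ↥(Module.End.eigenspace B.mulVecLin μ) :=
    Nat.sSup_mem (Set.range_nonempty _) ⟨N, by rintro _ ⟨μ, rfl⟩; exact hle μ⟩
  have hdim : Module.finrank K ↥(Module.End.eigenspace B.mulVecLin μ) = N - m := by
    have := hle μ
    unfold matSupport at hA
    rw [← hμ, Fintype.card_fin] at hA
    omega
  -- the `q`-Frobenius of `K` carries the `μ`-eigenspace to an eigenspace of the same dimension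
  let φ := FiniteField.frobeniusAlgHom F K
  have hrank : (B - Matrix.scalar (Fin N) (φ μ)).rank = (B - Matrix.scalar (Fin N) μ).rank := by
    let := φ.toRingHom.toAlgebra
    rw [← rank_map_algebraMap (L := K) (B - Matrix.scalar (Fin N) μ)]
    congr 1
    ext i j
    have hφ : ∀ x : K, algebraMap K K x = φ x := fun x => rfl
    by_cases hij : i = j <;> simp [hB, hφ, hij]
  have h1 := finrank_eigenspace_add_rank B μ
  have h2 := finrank_eigenspace_add_rank B (φ μ)
  rw [Fintype.card_fin] at h1 h2
  have hfix : φ μ = μ := by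
    by_contra hne
    have hd : Disjoint (Module.End.eigenspace B.mulVecLin (φ μ))
        (Module.End.eigenspace B.mulVecLin μ) :=
      (Module.End.eigenspaces_iSupIndep _).pairwiseDisjoint hne
    have := Submodule.finrank_add_finrank_le_of_disjoint hd
    rw [Module.finrank_fintype_fun_eq_card, Fintype.card_fin] at this
    omega
  obtain ⟨c, hc⟩ := mem_range_algebraMap_of_pow_card (F := F) μ hfix
  refine ⟨c, ?_⟩
  rw [← rank_map_algebraMap (L := K)]
  have : (A - Matrix.scalar (Fin N) c).map (algebraMap F K) = B - Matrix.scalar (Fin N) μ := by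
    ext i j
    by_cases hij : i = j <;> simp [hB, ← hc, hij]
  rw [this]
  omega

/-! ### Counting tuples of vectors -/

lemma natCard_submodule {F E : Type*} [Field F] [Fintype F] [AddCommGroup E] [Module F E]
    [Finite E] (W : Submodule F E) : Nat.card W = Fintype.card F ^ Module.finrank F W := by
  rw [Module.natCard_eq_pow_finrank (K := F), Nat.card_eq_fintype_card]

/-- Choosing the vectors one at a time, the `j`-th one avoids the `j`-dimensional span of the previous
ones, which is contained in `U j` by monotonicity. -/
lemma card_linearIndependent_mem {F E : Type*} [Field F] [Fintype F] [AddCommGroup E] [Module F E]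
    [Finite E] {b : ℕ} (U : Fin b → Submodule F E) (hU : Monotone U) :
    Nat.card {v : Fin b → E // LinearIndependent F v ∧ ∀ j, v j ∈ U j} =
      ∏ j : Fin b, (Fintype.card F ^ Module.finrank F (U j) - Fintype.card F ^ j.val) := by
  induction b with
  | zero =>
    have : Unique {v : Fin 0 → E // LinearIndependent F v ∧ ∀ j, v j ∈ U j} :=
      { default := ⟨Fin.elim0, linearIndependent_empty_type, fun j => j.elim0⟩
        uniq := fun x => Subsingleton.elim _ _ }
    simp
  | succ b ih =>
    let e : {v : Fin (b + 1) → E // LinearIndependent F v ∧ ∀ j, v j ∈ U j} ≃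
        Σ v : {v : Fin b → E // LinearIndependent F v ∧ ∀ j, v j ∈ U j.castSucc},
          ((U (Fin.last b) : Set E) \ (Submodule.span F (Set.range v.1) : Set E) : Set E) :=
      { toFun := fun v => ⟨⟨Fin.init v.1, by
            have h := v.2.1
            rw [← Fin.snoc_init_self v.1, linearIndependent_finSnoc] at h
            exact h.1, fun j => v.2.2 j.castSucc⟩,
          ⟨v.1 (Fin.last b), v.2.2 _, by
            have h := v.2.1
            rw [← Fin.snoc_init_self v.1, linearIndependent_finSnoc] at h
            exact h.2⟩⟩
        invFun := fun p => ⟨Fin.snoc p.1.1 p.2.1, by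
          refine ⟨linearIndependent_finSnoc.2 ⟨p.1.2.1, p.2.2.2⟩, fun j => ?_⟩
          induction j using Fin.lastCases with
          | last => simpa using p.2.2.1
          | cast j => simpa using p.1.2.2 j⟩
        left_inv := fun v => by ext1; exact Fin.snoc_init_self v.1
        right_inv := fun p => by
          rcases p with ⟨⟨v, hv⟩, ⟨x, hx⟩⟩
          simp only [Sigma.mk.injEq, Fin.init_snoc, Fin.snoc_last, true_and]
          congr!
          simp }
    have := Fintype.ofFinite {v : Fin b → E // LinearIndependent F v ∧ ∀ j, v j ∈ U j.castSucc}
    rw [Nat.card_congr e, Nat.card_sigma, Fin.prod_univ_castSucc]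
    have hfib : ∀ v : {v : Fin b → E // LinearIndependent F v ∧ ∀ j, v j ∈ U j.castSucc},
        Nat.card ((U (Fin.last b) : Set E) \ (Submodule.span F (Set.range v.1) : Set E) : Set E) =
          Fintype.card F ^ Module.finrank F (U (Fin.last b)) - Fintype.card F ^ b := by
      intro v
      have hsub : (Submodule.span F (Set.range v.1) : Set E) ⊆ U (Fin.last b) := by
        rw [SetLike.coe_subset_coe, Submodule.span_le]
        rintro _ ⟨j, rfl⟩
        exact hU (Fin.le_last _) (v.2.2 j)
      rw [Nat.card_coe_set_eq, Set.ncard_sdiff hsub, ← Nat.card_coe_set_eq,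
        ← Nat.card_coe_set_eq]
      simp only [SetLike.coe_sort_coe]
      rw [natCard_submodule, natCard_submodule, finrank_span_eq_card v.2.1, Fintype.card_fin]
    rw [Finset.sum_congr rfl fun v _ => hfib v, Finset.sum_const, smul_eq_mul, Finset.card_univ,
      ← Nat.card_eq_fintype_card, ih _ fun i j hij => hU (Fin.castSucc_le_castSucc_iff.2 hij)]
    rfl

/-- Few tuples have a nontrivial combination in a small subspace `R`: this is a union bound over the
coefficients `c`, and for fixed `c ≠ 0` the combination is equidistributed in `E`. -/
lemma card_relation_mul_le {F E : Type*} [Field F] [Fintype F] [AddCommGroup E] [Module F E]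
    [Finite E] {b : ℕ} (R : Submodule F E) :
    Nat.card {v : Fin b → E // ∃ c : Fin b → F, c ≠ 0 ∧ ∑ j, c j • v j ∈ R} *
        Fintype.card F ^ Module.finrank F E ≤
      Fintype.card F ^ (b + b * Module.finrank F E + Module.finrank F R) := by
  classical
  have hfib : ∀ c : Fin b → F, c ≠ 0 → Nat.card {v : Fin b → E // ∑ j, c j • v j ∈ R} * Nat.card E
      ≤ Nat.card R * Nat.card (Fin b → E) := by
    intro c hc
    obtain ⟨i, hi⟩ := Function.ne_iff.1 hc
    rw [← Nat.card_prod, ← Nat.card_prod]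
    -- replace the `i`-th coordinate of `v` by an arbitrary vector
    refine Nat.card_le_card_of_injective
      (fun p => (⟨∑ j, c j • p.1.1 j, p.1.2⟩, Function.update p.1.1 i p.2)) ?_
    rintro ⟨⟨v, hv⟩, x⟩ ⟨⟨w, hw⟩, y⟩ h
    simp only [Prod.mk.injEq, Subtype.mk.injEq] at h
    obtain ⟨h1, h2⟩ := h
    have hxy : x = y := by simpa using congrFun h2 i
    have hne : ∀ j, j ≠ i → v j = w j := fun j hj => by simpa [hj] using congrFun h2 j
    have hvi : v i = w i := by
      rw [← Finset.add_sum_erase _ _ (Finset.mem_univ i),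
        ← Finset.add_sum_erase _ (fun j => c j • w j) (Finset.mem_univ i),
        Finset.sum_congr rfl fun j hj => by rw [hne j (Finset.ne_of_mem_erase hj)]] at h1
      exact smul_right_injective E hi (add_right_cancel h1)
    have hvw : v = w := funext fun j => by
      by_cases hj : j = i
      · rw [hj, hvi]
      · exact hne j hj
    subst hvw hxy
    rfl
  have hcard : Nat.card {v : Fin b → E // ∃ c : Fin b → F, c ≠ 0 ∧ ∑ j, c j • v j ∈ R} ≤
      ∑ c : {c : Fin b → F // c ≠ 0}, Nat.card {v : Fin b → E // ∑ j, c.1 j • v j ∈ R} := by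
    rw [← Nat.card_sigma]
    refine Nat.card_le_card_of_surjective
      (fun p : Σ c : {c : Fin b → F // c ≠ 0}, {v : Fin b → E // ∑ j, c.1 j • v j ∈ R} =>
        ⟨p.2.1, p.1.1, p.1.2, p.2.2⟩) ?_
    rintro ⟨v, c, hc, hv⟩
    exact ⟨⟨⟨c, hc⟩, ⟨v, hv⟩⟩, rfl⟩
  have hE : Nat.card E = Fintype.card F ^ Module.finrank F E := by
    rw [Module.natCard_eq_pow_finrank (K := F), Nat.card_eq_fintype_card]
  rw [← hE]
  calc _ ≤ (∑ c : {c : Fin b → F // c ≠ 0}, Nat.card {v : Fin b → E // ∑ j, c.1 j • v j ∈ R})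
        * Nat.card E := Nat.mul_le_mul_right _ hcard
    _ = ∑ c : {c : Fin b → F // c ≠ 0}, Nat.card {v : Fin b → E // ∑ j, c.1 j • v j ∈ R}
        * Nat.card E := Finset.sum_mul _ _ _
    _ ≤ ∑ _c : {c : Fin b → F // c ≠ 0}, Nat.card R * Nat.card (Fin b → E) :=
        Finset.sum_le_sum fun c _ => hfib c.1 c.2
    _ = Fintype.card {c : Fin b → F // c ≠ 0} * (Nat.card R * Nat.card (Fin b → E)) := by simp
    _ ≤ Fintype.card (Fin b → F) * (Nat.card R * Nat.card (Fin b → E)) :=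
        Nat.mul_le_mul_right _ (Fintype.card_subtype_le _)
    _ = _ := by
      rw [Nat.card_fun, hE, natCard_submodule, Fintype.card_fun, Nat.card_eq_fintype_card, Fintype.card_fin,
        ← pow_mul, ← pow_add, ← pow_add]
      congr 1
      ring

/-! ### Flags and adapted bases -/

lemma mono_upto {k : ℕ} {a : ℕ → ℕ} (hmono : ∀ i < k, a i < a (i + 1)) {i j : ℕ} (hij : i ≤ j)
    (hj : j ≤ k) : a i ≤ a j := by
  induction j, hij using Nat.le_induction with
  | base => rfl
  | succ j hij ih => exact (ih (by omega)).trans (hmono j (by omega)).le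

/-- The function `idx` sends a position `j < a k` to the block `[a i, a (i + 1))` containing it. -/
lemma exists_block_index {k : ℕ} {a : ℕ → ℕ} (ha0 : a 0 = 0) :
    ∃ idx : ℕ → ℕ, ∀ j < a k, idx j < k ∧ a (idx j) ≤ j ∧ j < a (idx j + 1) := by
  have : ∀ j, ∃ i, j < a k → i < k ∧ a i ≤ j ∧ j < a (i + 1) := by
    intro j
    induction k with
    | zero => exact ⟨0, fun h => by omega⟩
    | succ k ih =>
      obtain ⟨i, hi⟩ := ih
      by_cases h : j < a k
      · exact ⟨i, fun _ => ⟨by have := hi h; omega, (hi h).2⟩⟩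
      · exact ⟨k, fun h' => ⟨by omega, by omega, h'⟩⟩
  choose idx hidx using this
  exact ⟨idx, hidx⟩

lemma block_index_le {k : ℕ} {a : ℕ → ℕ} (hmono : ∀ i < k, a i < a (i + 1)) {idx : ℕ → ℕ}
    (hidx : ∀ j < a k, idx j < k ∧ a (idx j) ≤ j ∧ j < a (idx j + 1)) {i j : ℕ} (hi : i < k)
    (hj : j < a (i + 1)) : idx j ≤ i := by
  have hjk : j < a k := hj.trans_le (mono_upto hmono hi le_rfl)
  obtain ⟨h1, h2, h3⟩ := hidx j hjk
  by_contra! hlt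
  have := mono_upto hmono (i := i + 1) (j := idx j) hlt h1.le
  omega

lemma finrank_span_initial {F E : Type*} [Field F] [AddCommGroup E] [Module F E] {b : ℕ}
    {v : Fin b → E} (hv : LinearIndependent F v) {d : ℕ} (hd : d ≤ b) :
    Module.finrank F ↥(Submodule.span F (v '' {j | j.val < d})) = d := by
  have : v '' {j | j.val < d} = Set.range (v ∘ Fin.castLE hd) := by
    ext x
    constructor
    · rintro ⟨j, hj, rfl⟩
      exact ⟨⟨j.val, hj⟩, rfl⟩
    · rintro ⟨j, rfl⟩
      exact ⟨Fin.castLE hd j, j.2, rfl⟩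
  rw [this, finrank_span_eq_card (hv.comp _ (Fin.castLE_injective hd)), Fintype.card_fin]

/-- Double counting of flags with adapted bases, where the `i`-th member of the flag is spanned by the
first `a (i + 1)` vectors. Every flag has the same number of adapted bases, because a linearly
independent tuple is adapted to `V` if and only if its `j`-th vector lies in `V (idx j)`. -/
lemma card_adapted_tuples {F E : Type*} [Field F] [Fintype F] [AddCommGroup E] [Module F E]
    [Finite E] {k : ℕ} {a : ℕ → ℕ} (hmono : ∀ i < k, a i < a (i + 1)) {idx : ℕ → ℕ}
    (hidx : ∀ j < a k, idx j < k ∧ a (idx j) ≤ j ∧ j < a (idx j + 1))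
    (Q : Submodule F E → Prop) :
    Nat.card {v : Fin (a k) → E // LinearIndependent F v ∧
        ∀ i : Fin k, Q (Submodule.span F (v '' {j | j.val < a (i.val + 1)}))} =
      Nat.card {V : Fin k → Submodule F E //
        StrictMono V ∧ (∀ i : Fin k, Module.finrank F ↥(V i) = a (i.1 + 1)) ∧ ∀ i, Q (V i)} *
      ∏ j : Fin (a k), (Fintype.card F ^ a (idx j + 1) - Fintype.card F ^ j.val) := by
  -- a tuple with each `v j` in its designated member of the flag spans the flag, by dimension
  have hspan : ∀ (V : Fin k → Submodule F E), Monotone V →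
      (∀ i : Fin k, Module.finrank F ↥(V i) = a (i.1 + 1)) → ∀ v : Fin (a k) → E,
      LinearIndependent F v → (∀ j : Fin (a k), v j ∈ V ⟨idx j, (hidx j j.2).1⟩) →
      ∀ i : Fin k, Submodule.span F (v '' {j | j.val < a (i.val + 1)}) = V i := by
    intro V hV hdim v hv hmem i
    apply Submodule.eq_of_le_of_finrank_eq
    · rw [Submodule.span_le]
      rintro _ ⟨j, hj, rfl⟩
      exact hV (block_index_le hmono hidx i.2 hj) (hmem j)
    · rw [finrank_span_initial hv (mono_upto hmono i.2 le_rfl), hdim]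
  let e : {v : Fin (a k) → E // LinearIndependent F v ∧
        ∀ i : Fin k, Q (Submodule.span F (v '' {j | j.val < a (i.val + 1)}))} ≃
      Σ V : {V : Fin k → Submodule F E //
        StrictMono V ∧ (∀ i : Fin k, Module.finrank F ↥(V i) = a (i.1 + 1)) ∧ ∀ i, Q (V i)},
        {v : Fin (a k) → E // LinearIndependent F v ∧
          ∀ j : Fin (a k), v j ∈ V.1 ⟨idx j, (hidx j j.2).1⟩} :=
    { toFun := fun v => ⟨⟨fun i => Submodule.span F (v.1 '' {j | j.val < a (i.val + 1)}), by
          have hdim : ∀ i : Fin k, Module.finrank F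
              ↥(Submodule.span F (v.1 '' {j | j.val < a (i.val + 1)})) = a (i.1 + 1) :=
            fun i => finrank_span_initial v.2.1 (mono_upto hmono i.2 le_rfl)
          refine ⟨fun i i' h => ?_, hdim, v.2.2⟩
          refine lt_of_le_of_ne (Submodule.span_mono (Set.image_mono fun j hj => ?_)) fun h' => ?_
          · exact lt_of_lt_of_le hj (mono_upto hmono (Nat.succ_le_succ h.le) i'.2)
          · have h1 := hdim i
            dsimp only at h'
            rw [h', hdim i'] at h1
            have h2 := mono_upto hmono (i := i.val + 1) (j := i'.val) h i'.2.le
            have h3 := hmono i' i'.2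
            omega⟩,
        ⟨v.1, v.2.1, fun j => Submodule.subset_span ⟨j, (hidx j j.2).2.2, rfl⟩⟩⟩
      invFun := fun p => ⟨p.2.1, p.2.2.1, fun i => by
        rw [hspan p.1.1 p.1.2.1.monotone p.1.2.2.1 p.2.1 p.2.2.1 p.2.2.2 i]
        exact p.1.2.2.2 i⟩
      left_inv := fun v => rfl
      right_inv := fun p => by
        rcases p with ⟨⟨V, hV⟩, ⟨v, hv⟩⟩
        have h := funext (hspan V hV.1.monotone hV.2.1 v hv.1 hv.2)
        dsimp only
        subst h
        rfl }
  have := Fintype.ofFinite {V : Fin k → Submodule F E //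
        StrictMono V ∧ (∀ i : Fin k, Module.finrank F ↥(V i) = a (i.1 + 1)) ∧ ∀ i, Q (V i)}
  rw [Nat.card_congr e, Nat.card_sigma]
  rw [Finset.sum_congr rfl fun V _ => card_linearIndependent_mem _ fun i j hij =>
      V.2.1.monotone (block_index_le hmono hidx (hidx j j.2).1
        (lt_of_le_of_lt hij (hidx j j.2).2.2))]
  simp [fun V : {V : Fin k → Submodule F E //
    StrictMono V ∧ (∀ i : Fin k, Module.finrank F ↥(V i) = a (i.1 + 1)) ∧ ∀ i, Q (V i)} => V.2.2.1]

lemma map_eq_self_iff {F E : Type*} [Field F] [AddCommGroup E] [Module F E]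
    [FiniteDimensional F E] {G h : E →ₗ[F] E} (hG : Function.Injective G)
    {c : F} (hGh : ∀ v, G v = h v + c • v) (V : Submodule F E) : V.map G = V ↔ ∀ v ∈ V, h v ∈ V := by
  have hmem : ∀ v ∈ V, (h v ∈ V ↔ G v ∈ V) := fun v hv => by
    rw [hGh, Submodule.add_mem_iff_left V (V.smul_mem c hv)]
  constructor
  · intro hV v hv
    rw [hmem v hv]
    exact hV ▸ Submodule.mem_map_of_mem hv
  · intro hV
    apply Submodule.eq_of_le_of_finrank_eq
    · rintro _ ⟨v, hv, rfl⟩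
      exact (hmem v hv).1 (hV v hv)
    · exact (Submodule.equivMapOfInjective G hG V).finrank_eq.symm

/-- With `G = h + c`, a flag inside `ker h` is `G`-stable, while a `G`-stable flag not contained in
`ker h` has a nonzero vector of `range h` in its top member. -/
lemma stable_tuples_sandwich {F E : Type*} [Field F] [Fintype F] [AddCommGroup E] [Module F E]
    [Finite E] {k : ℕ} (hk : 0 < k) {a : ℕ → ℕ} {G h : E →ₗ[F] E} (hG : Function.Injective G)
    {c : F} (hGh : ∀ v, G v = h v + c • v) :
    Nat.card {v : Fin (a k) → E // LinearIndependent F v ∧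
        ∀ j, v j ∈ LinearMap.ker h} ≤
      Nat.card {v : Fin (a k) → E // LinearIndependent F v ∧ ∀ i : Fin k,
        (Submodule.span F (v '' {j | j.val < a (i.val + 1)})).map G =
          Submodule.span F (v '' {j | j.val < a (i.val + 1)})} ∧
    Nat.card {v : Fin (a k) → E // LinearIndependent F v ∧ ∀ i : Fin k,
        (Submodule.span F (v '' {j | j.val < a (i.val + 1)})).map G =
          Submodule.span F (v '' {j | j.val < a (i.val + 1)})} ≤
      Nat.card {v : Fin (a k) → E // LinearIndependent F v ∧
        ∀ j, v j ∈ LinearMap.ker h} +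
      Nat.card {v : Fin (a k) → E // ∃ d : Fin (a k) → F, d ≠ 0 ∧
        ∑ j, d j • v j ∈ LinearMap.range h} := by
  simp only [map_eq_self_iff hG hGh]
  have card_eq : ∀ P : (Fin (a k) → E) → Prop, Nat.card {v // P v} = {v | P v}.ncard :=
    fun P => Nat.card_coe_set_eq _
  simp only [card_eq]
  constructor
  · refine Set.ncard_le_ncard ?_ (Set.toFinite _)
    rintro v ⟨hv, hker⟩
    refine ⟨hv, fun i x hx => ?_⟩
    have : Submodule.span F (v '' {j | j.val < a (i.val + 1)}) ≤ LinearMap.ker h := by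
      rw [Submodule.span_le]
      rintro _ ⟨j, -, rfl⟩
      exact hker j
    rw [LinearMap.mem_ker.1 (this hx)]
    exact Submodule.zero_mem _
  · refine (Set.ncard_le_ncard ?_ (Set.toFinite _)).trans (Set.ncard_union_le _ _)
    rintro v ⟨hv, hst⟩
    by_cases hker : ∀ j, v j ∈ LinearMap.ker h
    · exact Or.inl ⟨hv, hker⟩
    · right
      push Not at hker
      obtain ⟨j, hj⟩ := hker
      -- the top member of the flag is spanned by the whole tuple, so it contains `h (v j) ≠ 0`
      have hlast := hst ⟨k - 1, by omega⟩ (v j) (Submodule.subset_span ⟨j, by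
        have : k - 1 + 1 = k := by omega
        simp [this], rfl⟩)
      have hr : h (v j) ∈ Submodule.span F (Set.range v) :=
        Submodule.span_mono (Set.image_subset_range _ _) hlast
      obtain ⟨d, hd⟩ := (Submodule.mem_span_range_iff_exists_fun F).1 hr
      refine ⟨d, ?_, hd ▸ ⟨v j, rfl⟩⟩
      rintro rfl
      apply hj
      rw [LinearMap.mem_ker, ← hd]
      simp

/-! ### The product formula -/

lemma prod_blocks {M : Type*} [CommMonoid M] {k : ℕ} {a : ℕ → ℕ} (ha0 : a 0 = 0)
    (hmono : ∀ i < k, a i < a (i + 1)) {idx : ℕ → ℕ}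
    (hidx : ∀ j < a k, idx j < k ∧ a (idx j) ≤ j ∧ j < a (idx j + 1)) (f : ℕ → ℕ → M) :
    ∏ j ∈ Finset.range (a k), f (idx j) j =
      ∏ i ∈ Finset.range k, ∏ l ∈ Finset.range (a (i + 1) - a i), f i (a i + l) := by
  have hind : ∀ i < k, ∀ j, a i ≤ j → j < a (i + 1) → idx j = i := by
    intro i hi j h1 h2
    have hle := block_index_le hmono hidx hi h2
    have hj := hidx j (h2.trans_le (mono_upto hmono hi le_rfl))
    by_contra hne
    have := mono_upto hmono (i := idx j + 1) (j := i) (by omega) hi.le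
    omega
  suffices ∀ n ≤ k, ∏ j ∈ Finset.range (a n), f (idx j) j =
      ∏ i ∈ Finset.range n, ∏ l ∈ Finset.range (a (i + 1) - a i), f i (a i + l) from
    this k le_rfl
  intro n hn
  induction n with
  | zero => simp [ha0]
  | succ n ih =>
    have hlt := hmono n hn
    rw [Finset.prod_range_succ, ← ih (by omega),
      show a (n + 1) = a n + (a (n + 1) - a n) by omega, Finset.prod_range_add]
    congr 1
    rw [show a n + (a (n + 1) - a n) - a n = a (n + 1) - a n by omega]
    refine Finset.prod_congr rfl fun l hl => ?_
    rw [hind n hn _ (by omega) (by have := Finset.mem_range.1 hl; omega)]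

/-- With `[n]! = ∏_{1 ≤ j ≤ n} (q ^ j - 1)`, the number of linearly independent `b`-tuples in
dimension `n` is `q ^ (0 + ⋯ + (b - 1)) * [n]! / [n - b]!`. -/
lemma prod_pow_sub_pow (q : ℝ) {b n : ℕ} (hb : b ≤ n) :
    (∏ j ∈ Finset.range b, (q ^ n - q ^ j)) * ∏ j ∈ Finset.range (n - b), (q ^ (j + 1) - 1) =
      (∏ j ∈ Finset.range b, q ^ j) * ∏ j ∈ Finset.range n, (q ^ (j + 1) - 1) := by
  induction b with
  | zero => simp
  | succ b ih =>
    have ih' := ih (by omega)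
    rw [show n - b = n - (b + 1) + 1 by omega, Finset.prod_range_succ] at ih'
    have hpow : q ^ n = q ^ b * q ^ (n - (b + 1) + 1) := by
      rw [← pow_add]
      congr 1
      omega
    rw [Finset.prod_range_succ, Finset.prod_range_succ]
    linear_combination q ^ b * ih' + (∏ j ∈ Finset.range b, (q ^ n - q ^ j)) *
      (∏ j ∈ Finset.range (n - (b + 1)), (q ^ (j + 1) - 1)) * hpow

/-- The product formula times the number of adapted bases of a flag is the number of linearly
independent `a k`-tuples; both powers of `q` that appear are `∏_{j < a k} q ^ j`. -/
lemma flagFormula_mul {q k N : ℕ} (hq : 1 < q) {a : ℕ → ℕ} (ha0 : a 0 = 0)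
    (hmono : ∀ i < k, a i < a (i + 1)) {idx : ℕ → ℕ}
    (hidx : ∀ j < a k, idx j < k ∧ a (idx j) ≤ j ∧ j < a (idx j + 1)) (hN : a k ≤ N) :
    flagFormula q k N a * ∏ j ∈ Finset.range (a k), ((q : ℝ) ^ a (idx j + 1) - (q : ℝ) ^ j) =
      ∏ j ∈ Finset.range (a k), ((q : ℝ) ^ N - (q : ℝ) ^ j) := by
  have hq' : (1 : ℝ) < q := by exact_mod_cast hq
  have hpos : ∀ n, 0 < ∏ j ∈ Finset.range n, ((q : ℝ) ^ (j + 1) - 1) := fun n =>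
    Finset.prod_pos fun j _ => sub_pos.2 (one_lt_pow₀ hq' (by omega))
  have hden : ∏ i ∈ Finset.range (k + 1),
      ∏ j ∈ Finset.range ((if i + 1 ≤ k then a (i + 1) else N) - a i), ((q : ℝ) ^ (j + 1) - 1) =
      (∏ i ∈ Finset.range k, ∏ j ∈ Finset.range (a (i + 1) - a i), ((q : ℝ) ^ (j + 1) - 1)) *
        ∏ j ∈ Finset.range (N - a k), ((q : ℝ) ^ (j + 1) - 1) := by
    rw [Finset.prod_range_succ]
    congr 1
    · refine Finset.prod_congr rfl fun i hi => ?_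
      rw [if_pos (show i + 1 ≤ k from Finset.mem_range.1 hi)]
    · rw [if_neg (by omega)]
  have hP : ∏ j ∈ Finset.range (a k), ((q : ℝ) ^ a (idx j + 1) - (q : ℝ) ^ j) =
      (∏ j ∈ Finset.range (a k), (q : ℝ) ^ j) *
      ∏ i ∈ Finset.range k, ∏ j ∈ Finset.range (a (i + 1) - a i), ((q : ℝ) ^ (j + 1) - 1) := by
    rw [prod_blocks ha0 hmono hidx (fun i j => (q : ℝ) ^ a (i + 1) - (q : ℝ) ^ j),
      prod_blocks ha0 hmono hidx (fun _ j => (q : ℝ) ^ j), ← Finset.prod_mul_distrib]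
    refine Finset.prod_congr rfl fun i hi => ?_
    have hlt := hmono i (Finset.mem_range.1 hi)
    have h := prod_pow_sub_pow (q : ℝ) (le_refl (a (i + 1) - a i))
    rw [Nat.sub_self, Finset.prod_range_zero, mul_one] at h
    simp only [pow_add, Finset.prod_mul_distrib]
    simp only [pow_add] at h
    rw [mul_assoc, ← h, ← Finset.prod_mul_distrib]
    refine Finset.prod_congr rfl fun l _ => ?_
    rw [mul_sub, ← pow_add, ← pow_add, Nat.add_sub_cancel' hlt.le]
  have hT := prod_pow_sub_pow (q : ℝ) hN
  have h1 := hpos (N - a k)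
  have h2 : 0 < ∏ i ∈ Finset.range k,
      ∏ j ∈ Finset.range (a (i + 1) - a i), ((q : ℝ) ^ (j + 1) - 1) :=
    Finset.prod_pos fun i _ => hpos _
  rw [flagFormula, hden, hP, div_mul_eq_mul_div, div_eq_iff (mul_pos h2 h1).ne']
  linear_combination (-∏ i ∈ Finset.range k,
      ∏ j ∈ Finset.range (a (i + 1) - a i), ((q : ℝ) ^ (j + 1) - 1)) * hT

/-! ### The estimate -/

/-- The numerical estimate: `S` counts the adapted bases of stable flags, the product over
`q ^ (N - m)` the tuples among them lying in a subspace of codimension `m`, and `B` bounds the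
remaining ones. Both error terms are at most `q ^ (2 * b + m + b * m - N)` relative to the number
of all linearly independent `b`-tuples. -/
lemma ratio_estimate {q b m N : ℕ} (hq : 2 ≤ q) (hN : 2 * (2 * b + m + b * m) < N)
    {S B : ℕ} (hlow : ∏ j ∈ Finset.range b, (q ^ (N - m) - q ^ j) ≤ S)
    (hup : S ≤ ∏ j ∈ Finset.range b, (q ^ (N - m) - q ^ j) + B)
    (hB : B * q ^ N ≤ q ^ (b + b * N + m)) :
    |(S : ℝ) * (q : ℝ) ^ (b * m) / (∏ j ∈ Finset.range b, ((q : ℝ) ^ N - (q : ℝ) ^ j)) - 1| <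
      (q : ℝ) ^ (-(N : ℝ) / 2) := by
  have hmN : m + b ≤ N := by nlinarith [Nat.zero_le (b * m)]
  have hq1 : (1 : ℝ) < q := by exact_mod_cast hq
  have hq0 : (0 : ℝ) < q := by linarith
  set x : ℝ := (q : ℝ) with hx
  set T : ℝ := ∏ j ∈ Finset.range b, (x ^ N - x ^ j) with hT
  have hterm : ∀ j ∈ Finset.range b, 0 < x ^ N - x ^ j := fun j hj =>
    sub_pos.2 (pow_lt_pow_right₀ hq1 (by have := Finset.mem_range.1 hj; omega))
  have hTpos : 0 < T := Finset.prod_pos hterm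
  -- kernel tuples, rescaled by `q ^ (b * m)`
  set K : ℝ := ((∏ j ∈ Finset.range b, (q ^ (N - m) - q ^ j) : ℕ) : ℝ) with hK
  have hKeq : K * x ^ (b * m) = ∏ j ∈ Finset.range b, (x ^ N - x ^ (m + j)) := by
    rw [hK, Nat.cast_prod, mul_comm b m, pow_mul, ← Finset.card_range b, ← Finset.prod_const,
      Finset.card_range, ← Finset.prod_mul_distrib]
    refine Finset.prod_congr rfl fun j hj => ?_
    have hj' := Finset.mem_range.1 hj
    rw [Nat.cast_sub (Nat.pow_le_pow_right (by omega) (by omega))]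
    push_cast
    rw [sub_mul, ← pow_add, ← pow_add, Nat.sub_add_cancel (by omega), add_comm j m]
  set C := 2 * b + m + b * m with hC
  have hNpos : 0 < x ^ N := pow_pos hq0 N
  have hε : x ^ C / x ^ N < x ^ (-(N : ℝ) / 2) := by
    rw [← Real.rpow_natCast, ← Real.rpow_natCast, ← Real.rpow_sub hq0]
    apply Real.rpow_lt_rpow_of_exponent_lt hq1
    have : (2 * C : ℝ) < N := by exact_mod_cast hN
    linarith
  have hKup : K * x ^ (b * m) ≤ T := by
    rw [hKeq]
    refine Finset.prod_le_prod (fun j hj => ?_) fun j hj => ?_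
    · have hj' := Finset.mem_range.1 hj
      exact sub_nonneg.2 (pow_le_pow_right₀ hq1.le (by omega))
    · exact sub_le_sub_left (pow_le_pow_right₀ hq1.le (by omega)) _
  have hKlow : T * (1 - x ^ C / x ^ N) ≤ K * x ^ (b * m) := by
    set ε : ℝ := x ^ (m + b) / x ^ N with hεdef
    have hε0 : 0 ≤ ε := by positivity
    have hε1 : ε ≤ 1 := (div_le_one hNpos).2 (pow_le_pow_right₀ hq1.le hmN)
    have hεN : ε * x ^ N = x ^ (m + b) := div_mul_cancel₀ _ hNpos.ne'
    have hbε : b * ε ≤ x ^ C / x ^ N := by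
      rw [hεdef, ← mul_div_assoc]
      gcongr
      have hb : (b : ℝ) ≤ x ^ b := by
        rw [hx]
        exact_mod_cast (Nat.lt_pow_self (by omega)).le
      calc (b : ℝ) * x ^ (m + b) ≤ x ^ b * x ^ (m + b) := by gcongr
        _ = x ^ (b + (m + b)) := (pow_add _ _ _).symm
        _ ≤ x ^ C := pow_le_pow_right₀ hq1.le (by omega)
    have hbern : 1 - b * ε ≤ (1 - ε) ^ b := by
      have := one_add_mul_le_pow (a := -ε) (by linarith) b
      rw [← sub_eq_add_neg] at this
      linarith
    calc T * (1 - x ^ C / x ^ N) ≤ T * (1 - ε) ^ b :=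
          mul_le_mul_of_nonneg_left (by linarith) hTpos.le
      _ = ∏ j ∈ Finset.range b, (x ^ N - x ^ j) * (1 - ε) := by
          rw [Finset.prod_mul_distrib, Finset.prod_const, Finset.card_range]
      _ ≤ ∏ j ∈ Finset.range b, (x ^ N - x ^ (m + j)) := by
          refine Finset.prod_le_prod (fun j hj => mul_nonneg (hterm j hj).le (by linarith))
            fun j hj => ?_
          have hj' := Finset.mem_range.1 hj
          have h1 : x ^ (m + j) ≤ x ^ (m + b) := pow_le_pow_right₀ hq1.le (by omega)
          have h2 : ε * x ^ j ≤ x ^ j := mul_le_of_le_one_left (by positivity) hε1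
          nlinarith
      _ = _ := hKeq.symm
  -- each factor of `T` is at least `q ^ (N - 1)`
  have hTlow : x ^ (b * N) ≤ T * x ^ b := by
    rw [mul_comm b N, pow_mul, hT, ← Finset.card_range b, ← Finset.prod_const,
      ← Finset.prod_const, Finset.card_range, ← Finset.prod_mul_distrib]
    refine Finset.prod_le_prod (fun j _ => by positivity) fun j hj => ?_
    have hj' := Finset.mem_range.1 hj
    have h1 : x * x ^ j ≤ x ^ N := by
      rw [← pow_succ']
      exact pow_le_pow_right₀ hq1.le (by omega)
    have h2 : (2 : ℝ) ≤ x := by rw [hx]; exact_mod_cast hq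
    nlinarith
  have hBup : B * x ^ (b * m) ≤ T * (x ^ C / x ^ N) := by
    rw [← mul_div_assoc, le_div_iff₀ hNpos]
    have hB' : (B : ℝ) * x ^ N ≤ x ^ (b + b * N + m) := by rw [hx]; exact_mod_cast hB
    calc B * x ^ (b * m) * x ^ N = B * x ^ N * x ^ (b * m) := by ring
      _ ≤ x ^ (b + b * N + m) * x ^ (b * m) := by gcongr
      _ = x ^ (b * N) * x ^ (b + m + b * m) := by ring
      _ ≤ T * x ^ b * x ^ (b + m + b * m) := by gcongr
      _ = T * x ^ C := by rw [mul_assoc, ← pow_add]; congr 2; omega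
  have hS1 : K ≤ S := by rw [hK]; exact_mod_cast hlow
  have hS2 : (S : ℝ) ≤ K + B := by rw [hK]; exact_mod_cast hup
  have hxm : 0 < x ^ (b * m) := by positivity
  refine lt_of_le_of_lt ?_ hε
  rw [abs_le]
  constructor
  · have h1 : 1 - x ^ C / x ^ N ≤ S * x ^ (b * m) / T := by
      rw [le_div_iff₀ hTpos]
      nlinarith
    linarith
  · have h1 : S * x ^ (b * m) / T ≤ 1 + x ^ C / x ^ N := by
      rw [div_le_iff₀ hTpos]
      nlinarith
    linarith

/-- For fixed `m` and a fixed increasing sequence `a` of positive integers, and `N`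
sufficiently large: for every `g ∈ GL_N(q)` of support `m`, the number of `g`-stable
`a`-flags is `q^{-a_k m}(1+ε) F_a(N)` with `|ε| < q^{-N/2}`. -/
theorem stable_flags (k m : ℕ) (hk : 0 < k) (hm : 0 < m)
    (a : ℕ → ℕ) (ha0 : a 0 = 0) (hmono : ∀ i < k, a i < a (i + 1)) :
    ∃ N₀ : ℕ, ∀ (F : Type) [Field F] [Fintype F], ∀ N : ℕ, N₀ ≤ N →
      ∀ g : (Matrix (Fin N) (Fin N) F)ˣ,
        matSupport ((g : Matrix (Fin N) (Fin N) F)) = m →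
        |(stableFlagCount k N a g : ℝ) * (Fintype.card F : ℝ) ^ (a k * m) /
            flagFormula (Fintype.card F) k N a - 1|
          < (Fintype.card F : ℝ) ^ (-(N : ℝ) / 2) := by
  refine ⟨2 * (2 * a k + m + a k * m) + 1, fun F _ _ N hN g hg => ?_⟩
  have hbm := Nat.zero_le (a k * m)
  have hq : 2 ≤ Fintype.card F := Fintype.one_lt_card
  obtain ⟨c, hc⟩ := exists_eigenvalue_of_matSupport hm (by omega) _ hg
  obtain ⟨idx, hidx⟩ := exists_block_index (k := k) ha0
  set G := (g : Matrix (Fin N) (Fin N) F).mulVecLin with hGdef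
  set h := ((g : Matrix (Fin N) (Fin N) F) - Matrix.scalar (Fin N) c).mulVecLin with hh
  have hG : Function.Injective G := Matrix.mulVec_injective_of_isUnit g.isUnit
  have hGh : ∀ v, G v = h v + c • v := fun v => by
    rw [hGdef, hh, Matrix.mulVecLin_apply, Matrix.mulVecLin_apply, Matrix.sub_mulVec]
    have : (Matrix.scalar (Fin N) c).mulVec v = c • v := by
      ext i
      simp [Matrix.scalar_apply, Matrix.mulVec_diagonal]
    rw [this, sub_add_cancel]
  have hrange : Module.finrank F (LinearMap.range h) = m := hc
  have hE : Module.finrank F (Fin N → F) = N := by simp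
  have hker : Module.finrank F (LinearMap.ker h) = N - m := by
    have := LinearMap.finrank_range_add_finrank_ker h
    omega
  obtain ⟨hlow, hup⟩ := stable_tuples_sandwich (a := a) hk hG hGh
  have hcount := card_adapted_tuples (E := Fin N → F) hmono hidx (fun W => W.map G = W)
  have hB := card_relation_mul_le (b := a k) (LinearMap.range h)
  rw [card_linearIndependent_mem (fun _ => LinearMap.ker h) fun _ _ _ => le_rfl] at hlow hup
  simp only [hker] at hlow hup
  rw [Fin.prod_univ_eq_prod_range
    (fun j => Fintype.card F ^ (N - m) - Fintype.card F ^ j) (a k)] at hlow hup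
  rw [hE, hrange] at hB
  have hest := ratio_estimate hq (by omega) hlow hup hB
  rw [hcount, Fin.prod_univ_eq_prod_range
    (fun j => Fintype.card F ^ a (idx j + 1) - Fintype.card F ^ j) (a k)] at hest
  have hq1 : (1 : ℝ) < Fintype.card F := by exact_mod_cast hq
  have hcast : ((∏ j ∈ Finset.range (a k),
      (Fintype.card F ^ a (idx j + 1) - Fintype.card F ^ j) : ℕ) : ℝ) =
      ∏ j ∈ Finset.range (a k),
        ((Fintype.card F : ℝ) ^ a (idx j + 1) - (Fintype.card F : ℝ) ^ j) := by
    rw [Nat.cast_prod]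
    refine Finset.prod_congr rfl fun j hj => ?_
    rw [Nat.cast_sub (Nat.pow_le_pow_right (by omega) (hidx j (Finset.mem_range.1 hj)).2.2.le)]
    push_cast
    rfl
  have hP : 0 < ∏ j ∈ Finset.range (a k),
      ((Fintype.card F : ℝ) ^ a (idx j + 1) - (Fintype.card F : ℝ) ^ j) :=
    Finset.prod_pos fun j hj =>
      sub_pos.2 (pow_lt_pow_right₀ hq1 (hidx j (Finset.mem_range.1 hj)).2.2)
  rw [← flagFormula_mul hq ha0 hmono hidx (by omega), Nat.cast_mul, hcast, mul_right_comm,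
    mul_div_mul_right _ _ hP.ne'] at hest
  exact hest
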